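/- For the Weierstrass ℘-function with period lattice L_ω = ω·ℤ[τ] satisfying ℘′(z)² = 4℘(z)³ − 1, one has ℘(√−3·ω/6, L_ω) = −∛2. -/

import Mathlib

noncomputable section

open Complex Real ComplexConjugate

/-- `τ = (−1+√−3)/2`, a primitive cube root of unity. -/
def tau : ℂ := (-1 + Real.sqrt 3 * Complex.I) / 2

/-- `√−3 = 1 + 2τ`, the square root of `−3` with positive imaginary part. -/
def sqrtm3 : ℂ := Real.sqrt 3 * Complex.I

/-- The ring of integers `O_K = ℤ[τ]` of `K = ℚ(√−3)`, as a subring of `ℂ`. -/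
def Eis : Subring ℂ := Subring.closure {tau}

/-- `τ` as an element of `ℤ[τ]`. -/
def tauO : Eis := ⟨tau, Subring.subset_closure rfl⟩

/-- `√−3` as an element of `ℤ[τ]`. -/
def sqrtm3O : Eis := 1 + 2 * tauO

/-- Membership in the lattice `L_ω = ω·ℤ[τ]`. -/
def inLattice (ω : ℝ) (z : ℂ) : Prop := ∃ a : Eis, z = (ω : ℂ) * a

/-- The Weierstrass `℘`-function of the lattice `L_ω = ω·ℤ[τ]`. -/
def wp (ω : ℝ) (z : ℂ) : ℂ :=
  1 / z ^ 2 + ∑' a : {w : ℂ // inLattice ω w ∧ w ≠ 0},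
    (1 / (z - (a : ℂ)) ^ 2 - 1 / (a : ℂ) ^ 2)

/-- The Weierstrass `ζ`-function of the lattice `L_ω = ω·ℤ[τ]`. -/
def wzeta (ω : ℝ) (z : ℂ) : ℂ :=
  1 / z + ∑' a : {w : ℂ // inLattice ω w ∧ w ≠ 0},
    (1 / (z - (a : ℂ)) + 1 / (a : ℂ) + z / (a : ℂ) ^ 2)

/-- The real cube root of 2, as a complex number. -/
def cbrt2 : ℂ := ((2 : ℝ) ^ ((1 : ℝ) / 3) : ℝ)

/-- The real cube root of 4, as a complex number. -/
def cbrt4 : ℂ := ((4 : ℝ) ^ ((1 : ℝ) / 3) : ℝ)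

lemma hasSum_of_eq {ι : Type} {f g : ι → ℂ} {a : ℂ} (h : HasSum f a) (e : ∀ p, g p = f p) :
    HasSum g a := by
  have : g = f := funext e
  rwa [this]

lemma sqrt3_sq : ((Real.sqrt 3 : ℝ) : ℂ) ^ 2 = 3 := by
  rw [← Complex.ofReal_pow, Real.sq_sqrt (by norm_num)]; norm_num

lemma tau_sq : tau ^ 2 = -1 - tau := by
  have h := sqrt3_sq
  have hI := Complex.I_sq
  unfold tau
  linear_combination (Complex.I ^ 2 / 4) * h + (3 / 4) * hI

lemma sqrtm3_eq : sqrtm3 = 1 + 2 * tau := by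
  unfold sqrtm3 tau; ring

lemma tau_im : tau.im = Real.sqrt 3 / 2 := by
  simp [tau]

lemma conj_tau : conj tau = -1 - tau := by
  unfold tau
  simp only [map_div₀, map_add, map_neg, map_one, map_mul, Complex.conj_ofReal, Complex.conj_I,
    map_ofNat]
  ring

lemma tau_ne : tau ≠ 0 := by
  intro h
  have := tau_sq
  rw [h] at this
  norm_num at this

lemma indep_aux (ω : ℝ) (hω : 0 < ω) : LinearIndependent ℝ ![(ω : ℂ), (ω : ℂ) * tau] := by
  rw [LinearIndependent.pair_iff]
  intro s t h
  have him := congrArg Complex.im h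
  have hre := congrArg Complex.re h
  simp [tau_im] at him hre
  have h3 : Real.sqrt 3 ≠ 0 := by positivity
  have ht : t = 0 := by
    rcases him with h | h
    · exact h
    · exact absurd h hω.ne'
  subst ht
  simp at hre
  refine ⟨?_, rfl⟩
  rcases hre with h | h
  · exact h
  · exact absurd h hω.ne'

def PP (ω : ℝ) (hω : 0 < ω) : PeriodPair := ⟨ω, ω * tau, indep_aux ω hω⟩

lemma eis_iff (z : ℂ) : z ∈ Eis ↔ ∃ m n : ℤ, z = m + n * tau := by
  constructor
  · intro h
    unfold Eis at h
    induction h using Subring.closure_induction with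
    | mem x hx => exact ⟨0, 1, by simpa using hx⟩
    | zero => exact ⟨0, 0, by simp⟩
    | one => exact ⟨1, 0, by simp⟩
    | add x y _ _ hx hy =>
      obtain ⟨a, b, rfl⟩ := hx
      obtain ⟨c, d, rfl⟩ := hy
      exact ⟨a + c, b + d, by push_cast; ring⟩
    | neg x _ hx =>
      obtain ⟨a, b, rfl⟩ := hx
      exact ⟨-a, -b, by push_cast; ring⟩
    | mul x y _ _ hx hy =>
      obtain ⟨a, b, rfl⟩ := hx
      obtain ⟨c, d, rfl⟩ := hy
      exact ⟨a * c - b * d, a * d + b * c - b * d, by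
        push_cast; linear_combination (b * d : ℂ) * tau_sq⟩
  · rintro ⟨m, n, rfl⟩
    exact add_mem (intCast_mem _ m) (mul_mem (intCast_mem _ n) (Subring.subset_closure rfl))

lemma inLattice_iff (ω : ℝ) (hω : 0 < ω) (z : ℂ) : inLattice ω z ↔ z ∈ (PP ω hω).lattice := by
  rw [PeriodPair.mem_lattice]
  constructor
  · rintro ⟨⟨a, ha⟩, rfl⟩
    obtain ⟨m, n, rfl⟩ := (eis_iff _).1 ha
    exact ⟨m, n, by simp only [PP]; ring⟩
  · rintro ⟨m, n, rfl⟩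
    exact ⟨⟨m + n * tau, (eis_iff _).2 ⟨m, n, rfl⟩⟩, by simp only [PP]; ring⟩

lemma wp_eq (ω : ℝ) (hω : 0 < ω) : wp ω = (PP ω hω).weierstrassP := by
  funext z
  have h := (PP ω hω).weierstrassPExcept_add 0 z
  rw [← h]
  unfold wp PeriodPair.weierstrassPExcept
  have e1 := tsum_subtype {w : ℂ | inLattice ω w ∧ w ≠ 0} (fun a => 1 / (z - a) ^ 2 - 1 / a ^ 2)
  have e2 := tsum_subtype ((PP ω hω).lattice : Set ℂ)
    (fun a => if a = 0 then 0 else 1 / (z - a) ^ 2 - 1 / a ^ 2)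
  have e3 : (∑' a : {w : ℂ // inLattice ω w ∧ w ≠ 0}, (1 / (z - (a : ℂ)) ^ 2 - 1 / (a : ℂ) ^ 2))
    = ∑' l : (PP ω hω).lattice, if (l : ℂ) = 0 then 0 else (1 / (z - l) ^ 2 - 1 / (l : ℂ) ^ 2) := by
    refine e1.trans (Eq.trans ?_ e2.symm)
    congr 1
    funext x
    by_cases hx : x = 0 <;> by_cases hl : x ∈ (PP ω hω).lattice <;>
      simp [Set.indicator, hx, hl, inLattice_iff ω hω]
  rw [e3]
  simp
  ring

def ee (ω : ℝ) (p : ℤ × ℤ) : ℂ := ω * (p.1 + p.2 * tau)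

lemma hasSum_wp (ω : ℝ) (hω : 0 < ω) (z : ℂ) :
    HasSum (fun p : ℤ × ℤ => 1 / (z - ee ω p) ^ 2 - 1 / ee ω p ^ 2) (wp ω z) := by
  rw [wp_eq ω hω]
  have h := (PP ω hω).hasSum_weierstrassP z
  rw [← (PP ω hω).latticeEquivProd.symm.toEquiv.hasSum_iff] at h
  convert h using 2 with p
  have : ee ω p = (((PP ω hω).latticeEquivProd.symm p : (PP ω hω).lattice) : ℂ) := by
    rw [PeriodPair.latticeEquiv_symm_apply]
    simp only [PP, ee]; ring
  simp [this]

lemma wp_periodic (ω : ℝ) (hω : 0 < ω) (z : ℂ) (m n : ℤ) :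
    wp ω (z + ω * (m + n * tau)) = wp ω z := by
  have hm : (ω : ℂ) * (m + n * tau) ∈ (PP ω hω).lattice := by
    rw [PeriodPair.mem_lattice]
    exact ⟨m, n, by simp only [PP]; ring⟩
  rw [wp_eq ω hω]
  exact (PP ω hω).weierstrassP_add_coe z ⟨_, hm⟩

lemma wp_neg (ω : ℝ) (hω : 0 < ω) (z : ℂ) : wp ω (-z) = wp ω z := by
  rw [wp_eq ω hω]
  exact (PP ω hω).weierstrassP_neg z

/-- multiplication by tau on coordinates -/
def tauEquiv : ℤ × ℤ ≃ ℤ × ℤ where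
  toFun p := (-p.2, p.1 - p.2)
  invFun p := (p.2 - p.1, -p.1)
  left_inv p := by ext <;> simp
  right_inv p := by ext <;> simp

def conjEquiv : ℤ × ℤ ≃ ℤ × ℤ where
  toFun p := (p.1 - p.2, -p.2)
  invFun p := (p.1 - p.2, -p.2)
  left_inv p := by ext <;> simp
  right_inv p := by ext <;> simp

lemma wp_tau (ω : ℝ) (hω : 0 < ω) (z : ℂ) : wp ω (tau * z) = tau * wp ω z := by
  have h1 := hasSum_wp ω hω (tau * z)
  rw [← tauEquiv.hasSum_iff] at h1
  refine h1.unique ?_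
  refine hasSum_of_eq ((hasSum_wp ω hω z).mul_left tau) fun p => ?_
  have : ee ω (tauEquiv p) = tau * ee ω p := by
    simp only [ee, tauEquiv, Equiv.coe_fn_mk]; push_cast
    linear_combination (-ω * p.2 : ℂ) * tau_sq
  simp only [Function.comp, this, ← mul_sub, mul_pow]
  have h3 : (tau ^ 2)⁻¹ = tau := by
    have := tau_ne
    rw [inv_eq_iff_eq_inv]
    field_simp
    linear_combination (tau - 1) * tau_sq
  simp only [one_div, mul_inv, h3]
  ring

lemma wp_conj (ω : ℝ) (hω : 0 < ω) (z : ℂ) : wp ω (conj z) = conj (wp ω z) := by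
  have h1 := hasSum_wp ω hω (conj z)
  rw [← conjEquiv.hasSum_iff] at h1
  refine h1.unique ?_
  convert (hasSum_wp ω hω z).map (starRingEnd ℂ) Complex.continuous_conj using 1
  funext p
  have : ee ω (conjEquiv p) = conj (ee ω p) := by
    simp only [ee, conjEquiv, Equiv.coe_fn_mk, map_mul, map_add, conj_tau, Complex.conj_ofReal,
      map_intCast]
    push_cast; ring
  simp [Function.comp, this]

def jj : Fin 3 → ℤ := ![0, 1, -1]

def isoMap (q : Fin 3 × (ℤ × ℤ)) : ℤ × ℤ :=
  (q.2.1 - 2 * q.2.2 + jj q.1, 2 * q.2.1 - q.2.2)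

lemma isoMap_bij : Function.Bijective isoMap := by
  constructor
  · rintro ⟨i, x, y⟩ ⟨j, u, v⟩ h
    simp only [isoMap, Prod.mk.injEq] at h
    obtain ⟨h1, h2⟩ := h
    fin_cases i <;> fin_cases j <;> simp [jj] at h1 h2 ⊢ <;> omega
  · rintro ⟨p, q⟩
    have : (p + q) % 3 = 0 ∨ (p + q) % 3 = 1 ∨ (p + q) % 3 = 2 := by omega
    rcases this with h | h | h
    · exact ⟨(0, ((2 * q - p) / 3, (q - 2 * p) / 3)), by simp [isoMap, jj]; omega⟩
    · exact ⟨(1, ((2 * q - (p - 1)) / 3, (q - 2 * (p - 1)) / 3)), by simp [isoMap, jj]; omega⟩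
    · exact ⟨(2, ((2 * q - (p + 1)) / 3, (q - 2 * (p + 1)) / 3)), by simp [isoMap, jj]; omega⟩

lemma sqrtm3_sq : sqrtm3 ^ 2 = -3 := by
  rw [sqrtm3_eq]; linear_combination 4 * tau_sq

lemma iso_formula (ω : ℝ) (hω : 0 < ω) (z a : ℂ) (ha : a = sqrtm3 * ω / 3) :
    -3 * wp ω (sqrtm3 * z) = wp ω z + (wp ω (z + a) - wp ω a) + (wp ω (z - a) - wp ω (-a)) := by
  have h1 := (hasSum_wp ω hω (sqrtm3 * z)).mul_left (-3)
  rw [← (Equiv.ofBijective isoMap isoMap_bij).hasSum_iff] at h1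
  have hb : ∀ b : Fin 3, HasSum (fun p : ℤ × ℤ => 1 / (z + jj b * a - ee ω p) ^ 2
      - 1 / (jj b * a - ee ω p) ^ 2) (wp ω (z + jj b * a) - wp ω (jj b * a)) := by
    intro b
    refine hasSum_of_eq ((hasSum_wp ω hω (z + jj b * a)).sub (hasSum_wp ω hω (jj b * a))) fun p => ?_
    ring
  have h2 := h1.prod_fiberwise (g := fun b => wp ω (z + jj b * a) - wp ω (jj b * a)) ?_
  · have h3 := h2.unique (hasSum_fintype _)
    rw [h3, Fin.sum_univ_three]
    have h0 : wp ω 0 = 0 := by rw [wp_eq ω hω]; exact PeriodPair.weierstrassP_zero _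
    simp [jj, h0, sub_eq_add_neg]
  · intro b
    refine hasSum_of_eq (hb b) fun p => ?_
    simp only [Function.comp, Equiv.ofBijective_apply]
    have e : ee ω (isoMap (b, p)) = sqrtm3 * (ee ω p - jj b * a) := by
      rw [ha]
      simp only [ee, isoMap]
      push_cast
      have := sqrtm3_sq
      have h4 := sqrtm3_eq
      have h5 : (ω : ℂ) * (p.1 - 2 * p.2 + jj b + (2 * p.1 - p.2) * tau)
          = (1 + 2 * tau) * (ω * (p.1 + p.2 * tau)) + ω * jj b := by
        linear_combination (-2 * ω * p.2 : ℂ) * tau_sq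
      rw [h5, ← h4]
      linear_combination (jj b * ω / 3 : ℂ) * this
    rw [e, ← mul_sub, mul_pow, mul_pow, sqrtm3_sq]
    have e1 : (jj b * a - ee ω p) ^ 2 = (ee ω p - jj b * a) ^ 2 := by ring
    have e2 : z + jj b * a - ee ω p = z - (ee ω p - jj b * a) := by ring
    rw [e1, e2]
    simp only [one_div, mul_inv]
    ring

lemma wp_a (ω : ℝ) (hω : 0 < ω) : wp ω (sqrtm3 * ω / 3) = 0 := by
  have h1 := wp_tau ω hω (sqrtm3 * ω / 3)
  have h2 : tau * (sqrtm3 * ω / 3) = sqrtm3 * ω / 3 + ω * (((-1 : ℤ) : ℂ) + ((-1 : ℤ) : ℂ) * tau) := by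
    rw [sqrtm3_eq]; push_cast
    linear_combination (2 * ω / 3 : ℂ) * tau_sq
  rw [h2, wp_periodic ω hω] at h1
  have h3 : (1 - tau) * wp ω (sqrtm3 * ω / 3) = 0 := by linear_combination h1
  rcases mul_eq_zero.1 h3 with h | h
  · have h4 : tau = 1 := by linear_combination -h
    have := tau_sq
    rw [h4] at this
    norm_num at this
  · exact h

lemma wp_half (ω : ℝ) (hω : 0 < ω)
    (hODE : ∀ z : ℂ, ¬ inLattice ω z → deriv (wp ω) z ^ 2 = 4 * wp ω z ^ 3 - 1) :
    2 * wp ω (ω / 2) = cbrt2 := by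
  have h1 := hODE (ω / 2) (by
    rw [inLattice_iff ω hω]
    exact (PP ω hω).ω₁_div_two_notMem_lattice)
  have hd : deriv (wp ω) (ω / 2) = 0 := by
    rw [wp_eq ω hω, PeriodPair.deriv_weierstrassP]
    have h2 := (PP ω hω).derivWeierstrassP_add_coe (-(ω / 2)) ⟨_, (PP ω hω).ω₁_mem_lattice⟩
    have h3 : -((ω : ℂ) / 2) + (PP ω hω).ω₁ = ω / 2 := by simp only [PP]; ring
    simp only [h3, PeriodPair.derivWeierstrassP_neg] at h2
    linear_combination h2 / 2
  have hr := wp_conj ω hω (ω / 2)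
  have hc : conj ((ω : ℂ) / 2) = ω / 2 := by
    rw [map_div₀, Complex.conj_ofReal, map_ofNat]
  rw [hc] at hr
  obtain ⟨x, hx⟩ := Complex.conj_eq_iff_real.1 hr.symm
  rw [hd, hx] at h1
  rw [hx]
  have h5 : (2 * x) ^ 3 = 2 := by
    have : (((2 * x) ^ 3 : ℝ) : ℂ) = (2 : ℝ) := by push_cast; linear_combination -2 * h1
    exact_mod_cast this
  have h6 : 0 ≤ 2 * x := by
    by_contra h
    push Not at h
    have := Odd.pow_neg (by decide : Odd 3) h
    linarith
  have h7 : (2 : ℝ) ^ ((1 : ℝ) / 3) = 2 * x := by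
    have h8 : ((2 * x) ^ 3) ^ ((1 : ℝ) / 3) = 2 * x := by
      rw [← Real.rpow_natCast, ← Real.rpow_mul h6]
      norm_num
    rwa [h5] at h8
  unfold cbrt2
  rw [h7]; push_cast; ring

/-- From [Qiu], (2.13): `℘(√−3·ω/6) = −∛2`, with `√−3 = 1 + 2τ` the square root of `−3` with positive imaginary part.
Here `ω > 0` is pinned down by the differential equation `℘′² = 4℘³ − 1` for the
lattice `L_ω = ω·ℤ[τ]` (equivalently, the lattice invariants are `g₂ = 0`, `g₃ = 1`). -/
theorem wp_value_at_sqrt_point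
    (ω : ℝ) (hω : 0 < ω)
    (hODE : ∀ z : ℂ, ¬ inLattice ω z → deriv (wp ω) z ^ 2 = 4 * wp ω z ^ 3 - 1) :
    wp ω (sqrtm3 * (ω : ℂ) / 6) = -cbrt2 := by
  have h := iso_formula ω hω (sqrtm3 * ω / 6) _ rfl
  have e1 : sqrtm3 * (sqrtm3 * ω / 6) = -((ω : ℂ) / 2) := by
    linear_combination (ω / 6 : ℂ) * sqrtm3_sq
  have e2 : sqrtm3 * ω / 6 + sqrtm3 * ω / 3
      = (ω : ℂ) / 2 + ω * (((0 : ℤ) : ℂ) + ((1 : ℤ) : ℂ) * tau) := by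
    rw [sqrtm3_eq]; push_cast; ring
  have e3 : sqrtm3 * ω / 6 - sqrtm3 * ω / 3 = -(sqrtm3 * (ω : ℂ) / 6) := by ring
  rw [e1, e2, e3, wp_periodic ω hω, wp_neg ω hω, wp_neg ω hω, wp_neg ω hω, wp_a ω hω] at h
  have hh := wp_half ω hω hODE
  linear_combination -h / 2 - hh
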